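/- arXiv:2309.08883 — 2 statements merged into one kernel-verified Lean document; each statement's English description precedes it below -/
import Mathlib

section
/- Let n and l be natural numbers with l ≥ 1, and let w : {0,1}^n → ℝ be a function taking strictly positive values. Let M = max_{x ∈ {0,1}^n} w(x), and define the set S(w,l) ⊆ {0,1}^n × {0,1}^l to consist of all pairs (x, y) such that for every i with 1 ≤ i ≤ l, if w(x)/M ≤ 2^(i-1)/2^l then the i-th coordinate y_i of y equals 0. Then (∑_{x ∈ {0,1}^n} w(x)) ≤ (M/2^l) · |S(w,l)| ≤ 2·(∑_{x ∈ {0,1}^n} w(x)) + M·2^(n-l). -/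
/-!
Scale the weight of `x` to `t = w x / M * 2 ^ l ∈ [0, 2 ^ l]`. Bit `i` of `y` is free exactly when
`2 ^ i < t`, so the fiber of `S(w, l)` over `x` has `2 ^ k` elements, `k` being the number of
powers `2 ^ i < t` with `i < l`. Since `2 ^ i` is monotone, these `i` are exactly `0, …, k - 1`.
Hence `t ≤ 2 ^ k`, as otherwise `k` itself would be one of them, and unless `k = 0` the inequality
`2 ^ (k - 1) < t` gives `2 ^ k < 2 * t`. Summing `t ≤ 2 ^ k ≤ 2 * t + 1` over `x` and rescaling by
`M / 2 ^ l` gives both bounds.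
-/

open Finset

theorem lt_count_iff_of_antitone {p : ℕ → Prop} [DecidablePred p] (hp : Antitone p) {j l : ℕ} :
    j < Nat.count p l ↔ j < l ∧ p j := by
  constructor
  · intro hj
    have hjl : j < l := hj.trans_le (Nat.count_le p)
    refine ⟨hjl, by_contra fun hpj => hj.not_ge ?_⟩
    have hsub : {i ∈ range l | p i} ⊆ range j := fun i hi => by
      rw [mem_filter] at hi
      exact mem_range.2 (lt_of_not_ge fun hji => hpj (hp hji hi.2))
    simpa [Nat.count_eq_card_filter_range] using card_le_card hsub
  · rintro ⟨hjl, hpj⟩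
    have hcount : Nat.count p (j + 1) = j + 1 :=
      Nat.count_iff_forall.2 fun i hi => hp (Nat.le_of_lt_succ hi) hpj
    exact hcount.ge.trans (Nat.count_monotone p hjl)

section CountPow

variable {K : Type*} [Semiring K] [LinearOrder K] [IsOrderedRing K] {b t : K} {l : ℕ}

theorem lt_count_pow_lt_iff (hb : 1 ≤ b) {j : ℕ} :
    j < Nat.count (fun i => b ^ i < t) l ↔ j < l ∧ b ^ j < t :=
  lt_count_iff_of_antitone fun _ _ hij => (pow_le_pow_right₀ hb hij).trans_lt

theorem le_pow_count_pow_lt (hb : 1 ≤ b) (ht : t ≤ b ^ l) :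
    t ≤ b ^ Nat.count (fun i => b ^ i < t) l := by
  by_contra! hlt
  have hl : Nat.count (fun i => b ^ i < t) l < l :=
    (Nat.count_le _).lt_of_ne fun h => (h ▸ hlt).not_ge ht
  exact lt_irrefl _ ((lt_count_pow_lt_iff hb).2 ⟨hl, hlt⟩)

theorem pow_count_pow_lt_le (hb : 1 ≤ b) (ht : 0 ≤ t) :
    b ^ Nat.count (fun i => b ^ i < t) l ≤ b * t + 1 := by
  have hb₀ : 0 ≤ b := zero_le_one.trans hb
  cases hk : Nat.count (fun i => b ^ i < t) l with
  | zero => exact (pow_zero b).trans_le (le_add_of_nonneg_left (mul_nonneg hb₀ ht))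
  | succ j =>
    have hj : b ^ j < t := ((lt_count_pow_lt_iff hb).1 (j.lt_succ_self.trans_eq hk.symm)).2
    calc b ^ (j + 1) = b * b ^ j := pow_succ' b j
      _ ≤ b * t := mul_le_mul_of_nonneg_left hj.le hb₀
      _ ≤ b * t + 1 := le_add_of_nonneg_right zero_le_one

end CountPow

theorem card_filter_fin_eq_count (p : ℕ → Prop) [DecidablePred p] (l : ℕ) :
    #{i : Fin l | p i} = Nat.count p l := by
  rw [Nat.count_eq_card_filter_range, card_filter, card_filter,
    Fin.sum_univ_eq_sum_range fun i => if p i then 1 else 0]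

theorem card_forall_imp_eq_false {ι : Type*} [Fintype ι] (p : ι → Prop) [DecidablePred p] :
    Nat.card {y : ι → Bool // ∀ i, p i → y i = false} = 2 ^ #{i | ¬ p i} := by
  have hfactor (i : ι) : Nat.card {b : Bool // p i → b = false} = if ¬ p i then 2 else 1 := by
    by_cases h : p i <;> simp [h]
  rw [Nat.card_congr (Equiv.subtypePiEquivPi (p := fun i b => p i → b = false)), Nat.card_pi,
    prod_congr rfl fun i _ => hfactor i, prod_ite, prod_const, prod_const_one, mul_one]

section Discretization

variable {α K : Type*} [Field K] [LinearOrder K] [IsStrictOrderedRing K]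

/-- The set `S(w, l)` of pairs `(x, y)` whose unweighted count approximates the total weight of
`w`, up to the factor `M / 2 ^ l`. Bits are indexed from `0`, so the bit `y i` is the paper's
`y_{i+1}`, and `M` is an explicit parameter standing for an upper bound of `w`. -/
def discretizationSet (w : α → K) (M : K) (l : ℕ) : Set (α × (Fin l → Bool)) :=
  {p | ∀ i : Fin l, w p.1 / M ≤ 2 ^ (i : ℕ) / 2 ^ l → p.2 i = false}

theorem card_discretizationSet [Fintype α] (w : α → K) (M : K) (l : ℕ) :
    Nat.card (discretizationSet w M l) =
      ∑ x, 2 ^ Nat.count (fun i => 2 ^ i < w x / M * 2 ^ l) l := by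
  have hfiber (x : α) :
      Nat.card {y : Fin l → Bool // ∀ i : Fin l, w x / M ≤ 2 ^ (i : ℕ) / 2 ^ l → y i = false} =
        2 ^ Nat.count (fun i => 2 ^ i < w x / M * 2 ^ l) l := by
    have hl : (0 : K) < 2 ^ l := by positivity
    simp only [card_forall_imp_eq_false, le_div_iff₀ hl, not_le]
    rw [card_filter_fin_eq_count fun i => 2 ^ i < w x / M * 2 ^ l]
  rw [← sum_congr rfl fun x _ => hfiber x, ← Nat.card_sigma]
  exact Nat.card_congr (Equiv.subtypeProdEquivSigmaSubtype fun x (y : Fin l → Bool) =>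
    ∀ i : Fin l, w x / M ≤ 2 ^ (i : ℕ) / 2 ^ l → y i = false)

theorem sum_le_card_discretizationSet [Fintype α] (l : ℕ) {w : α → K} {M : K} (hM : 0 < M)
    (hwM : ∀ x, w x ≤ M) :
    ∑ x, w x ≤ M / 2 ^ l * Nat.card (discretizationSet w M l) := by
  have hscaled (x : α) : w x / M * 2 ^ l ≤ 2 ^ l :=
    mul_le_of_le_one_left (by positivity) ((div_le_one hM).2 (hwM x))
  calc ∑ x, w x = M / 2 ^ l * ∑ x, w x / M * 2 ^ l := by
        rw [mul_sum]
        exact sum_congr rfl fun x _ => by field_simp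
    _ ≤ M / 2 ^ l * ∑ x, 2 ^ Nat.count (fun i => 2 ^ i < w x / M * 2 ^ l) l := by
        gcongr with x
        exact le_pow_count_pow_lt one_le_two (hscaled x)
    _ = M / 2 ^ l * Nat.card (discretizationSet w M l) := by
        simp only [card_discretizationSet, Nat.cast_sum, Nat.cast_pow, Nat.cast_ofNat]

theorem card_discretizationSet_le [Fintype α] (l : ℕ) {w : α → K} {M : K} (hM : 0 < M)
    (hw : ∀ x, 0 ≤ w x) :
    M / 2 ^ l * Nat.card (discretizationSet w M l) ≤
      2 * ∑ x, w x + Fintype.card α * (M / 2 ^ l) := by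
  have hscaled (x : α) : 0 ≤ w x / M * 2 ^ l :=
    mul_nonneg (div_nonneg (hw x) hM.le) (by positivity)
  calc M / 2 ^ l * Nat.card (discretizationSet w M l)
      = M / 2 ^ l * ∑ x, 2 ^ Nat.count (fun i => 2 ^ i < w x / M * 2 ^ l) l := by
        simp only [card_discretizationSet, Nat.cast_sum, Nat.cast_pow, Nat.cast_ofNat]
    _ ≤ M / 2 ^ l * ∑ x, (2 * (w x / M * 2 ^ l) + 1) := by
        gcongr with x
        exact pow_count_pow_lt_le one_le_two (hscaled x)
    _ = ∑ x, (2 * w x + M / 2 ^ l) := by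
        rw [mul_sum]
        exact sum_congr rfl fun x _ => by field_simp
    _ = 2 * ∑ x, w x + Fintype.card α * (M / 2 ^ l) := by
        rw [sum_add_distrib, ← mul_sum, sum_const, card_univ, nsmul_eq_mul]

theorem discretization_lemma_general [Fintype α] (l : ℕ) {w : α → K} {M : K} (hM : 0 < M)
    (hw : ∀ x, 0 ≤ w x) (hwM : ∀ x, w x ≤ M) :
    ∑ x, w x ≤ M / 2 ^ l * Nat.card (discretizationSet w M l) ∧
      M / 2 ^ l * Nat.card (discretizationSet w M l) ≤
        2 * ∑ x, w x + Fintype.card α * (M / 2 ^ l) :=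
  ⟨sum_le_card_discretizationSet l hM hwM, card_discretizationSet_le l hM hw⟩

end Discretization

/-- Discretization lemma (Xue et al. 2016): both bounds.
`M` is the maximum of the strictly positive weight function `w` on `{0,1}^n`,
and `S(w,l)` is the set of pairs `(x,y)` such that for every `i ∈ {1,…,l}`,
if `w(x)/M ≤ 2^(i-1)/2^l` then `y_i = 0` (here `i : Fin l` plays the role of
`i-1 ∈ {0,…,l-1}` and `false` plays the role of `0`). Then
`∑ x, w x ≤ (M/2^l) * |S(w,l)| ≤ 2 * ∑ x, w x + M * 2^(n-l)`. -/
theorem discretization_lemma (n l : ℕ) (hl : 1 ≤ l)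
    (w : (Fin n → Bool) → ℝ) (hw : ∀ x, 0 < w x)
    (M : ℝ) (hM : IsGreatest (Set.range w) M) :
    (∑ x : Fin n → Bool, w x) ≤
        (M / 2 ^ l) *
          (Nat.card {p : (Fin n → Bool) × (Fin l → Bool) //
            ∀ i : Fin l, w p.1 / M ≤ 2 ^ (i : ℕ) / 2 ^ l → p.2 i = false} : ℝ) ∧
      (M / 2 ^ l) *
          (Nat.card {p : (Fin n → Bool) × (Fin l → Bool) //
            ∀ i : Fin l, w p.1 / M ≤ 2 ^ (i : ℕ) / 2 ^ l → p.2 i = false} : ℝ) ≤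
        2 * (∑ x : Fin n → Bool, w x) + M * (2 : ℝ) ^ ((n : ℤ) - (l : ℤ)) := by
  have hbound (x : Fin n → Bool) : w x ≤ M := hM.2 ⟨x, rfl⟩
  have hcard : (Fintype.card (Fin n → Bool) : ℝ) * (M / 2 ^ l) = M * 2 ^ ((n : ℤ) - l) := by
    simp [zpow_sub₀, mul_div_left_comm]
  exact hcard ▸ discretization_lemma_general l ((hw default).trans_le (hbound default))
    (fun x => (hw x).le) hbound
end

section
/- Let n and l be natural numbers with l ≥ 1, and let w : {0,1}^n → ℝ be a function taking strictly positive values. Let M = max_{x ∈ {0,1}^n} w(x), and define the set S(w,l) ⊆ {0,1}^n × {0,1}^l to consist of all pairs (x, y) such that for every i with 1 ≤ i ≤ l, if w(x)/M ≤ 2^(i-1)/2^l then the i-th coordinate y_i of y equals 0. Then the lower bound holds: ∑_{x ∈ {0,1}^n} w(x) ≤ (M/2^l) · |S(w,l)|. -/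
/-!
Fix `x` and put `t = w x / M ≤ 1`. In the fibre of `S(w,l)` over `x` the coordinates `i` with
`2 ^ i / 2 ^ l < t` are free and the others vanish, so the fibre has `2 ^ k` elements, where `k` is
the number of free coordinates. These form an initial segment `{0, …, k - 1}`, so `k` is the first
exponent with `t ≤ 2 ^ k / 2 ^ l` (for `k = l` this is `t ≤ 1`). Hence `w x ≤ (M / 2 ^ l) * 2 ^ k`,
and summing over `x` counts `S(w,l)` fibre by fibre.
-/

theorem card_subtype_prod_eq_sum {α β : Type*} [Fintype α] (r : α → β → Prop)
    [∀ a, Finite {b // r a b}] :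
    Nat.card {p : α × β // r p.1 p.2} = ∑ a, Nat.card {b // r a b} := by
  rw [Nat.card_congr (Equiv.subtypeProdEquivSigmaSubtype r), Nat.card_sigma]

theorem card_subtype_forall_imp_eq {ι β : Type*} [Finite ι] (p : ι → Prop) (b : ι → β) :
    Nat.card {y : ι → β // ∀ i, p i → y i = b i} = Nat.card β ^ Nat.card {i // ¬p i} := by
  classical
  have prescribed_iff (y : ι → β) :
      (∀ i, p i → y i = b i) ↔ y ∘ ((↑) : {i // p i} → ι) = fun i : {i // p i} ↦ b i := by
    simp only [funext_iff, Subtype.forall, Function.comp_apply]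
  rw [Nat.card_congr ((Equiv.subtypeEquivRight prescribed_iff).trans
    (Equiv.subtypePreimage p fun i : {i // p i} ↦ b i)), Nat.card_fun]

theorem le_apply_card_filter_lt {β : Type*} [LinearOrder β] {f : ℕ → β} (hf : Monotone f)
    {t : β} {l : ℕ} (ht : t ≤ f l) : t ≤ f (Finset.card {i : Fin l | f i < t}) := by
  by_contra! hlt
  set s : Finset (Fin l) := {i | f i < t}
  have hcard : s.card < l := hf.reflect_lt (hlt.trans_le ht)
  have initial_subset : Finset.Iic ⟨s.card, hcard⟩ ⊆ s := fun i hi ↦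
    Finset.mem_filter_univ i |>.mpr <| (hf (Fin.le_def.mp (Finset.mem_Iic.mp hi))).trans_lt hlt
  have hsucc := Finset.card_le_card initial_subset
  rw [Fin.card_Iic] at hsucc
  exact Nat.not_succ_le_self _ hsucc

section OrderedField

variable {K : Type*} [Field K] [LinearOrder K] [IsStrictOrderedRing K]

theorem le_card_fiber_div_two_pow {t : K} (ht : t ≤ 1) (l : ℕ) :
    t ≤ (Nat.card {y : Fin l → Bool // ∀ i : Fin l, t ≤ 2 ^ (i : ℕ) / 2 ^ l → y i = false} : K) /
      2 ^ l := by
  have hmono : Monotone fun i : ℕ ↦ (2 : K) ^ i / 2 ^ l :=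
    (pow_right_mono₀ one_le_two).div_const (by positivity)
  have hcard : Nat.card {y : Fin l → Bool // ∀ i : Fin l, t ≤ 2 ^ (i : ℕ) / 2 ^ l → y i = false} =
      2 ^ Finset.card {i : Fin l | (2 : K) ^ (i : ℕ) / 2 ^ l < t} := by
    rw [card_subtype_forall_imp_eq _ fun _ ↦ false]
    simp [Fintype.card_subtype]
  rw [hcard, Nat.cast_pow, Nat.cast_ofNat]
  exact le_apply_card_filter_lt hmono (by simpa using ht)

theorem discretization_lower_bound_general {α : Type*} [Fintype α] (l : ℕ) {w : α → K} {M : K}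
    (hM : 0 < M) (hw : ∀ x, w x ≤ M) :
    ∑ x, w x ≤ M / 2 ^ l * (Nat.card {p : α × (Fin l → Bool) //
      ∀ i : Fin l, w p.1 / M ≤ 2 ^ (i : ℕ) / 2 ^ l → p.2 i = false} : K) := by
  rw [card_subtype_prod_eq_sum fun x (y : Fin l → Bool) ↦
    ∀ i : Fin l, w x / M ≤ 2 ^ (i : ℕ) / 2 ^ l → y i = false, Nat.cast_sum, Finset.mul_sum]
  refine Finset.sum_le_sum fun x _ ↦ ?_
  have hfiber := le_card_fiber_div_two_pow ((div_le_one hM).mpr (hw x)) l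
  rwa [div_le_iff₀' hM, ← mul_comm_div] at hfiber

end OrderedField

/-- Discretization lemma, lower-bound direction:
`∑ x, w x ≤ (M/2^l) * |S(w,l)|`. -/
theorem discretization_lower_bound (n l : ℕ) (hl : 1 ≤ l)
    (w : (Fin n → Bool) → ℝ) (hw : ∀ x, 0 < w x)
    (M : ℝ) (hM : IsGreatest (Set.range w) M) :
    (∑ x : Fin n → Bool, w x) ≤
      (M / 2 ^ l) *
        (Nat.card {p : (Fin n → Bool) × (Fin l → Bool) //
          ∀ i : Fin l, w p.1 / M ≤ 2 ^ (i : ℕ) / 2 ^ l → p.2 i = false} : ℝ) := by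
  have hMpos : 0 < M := hM.1.elim fun x hx ↦ hx ▸ hw x
  exact discretization_lower_bound_general l hMpos fun x ↦ hM.2 ⟨x, rfl⟩
end
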